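/- Every convex pentagon in which some three consecutive interior angles sum to 360° (the Type 1 condition) admits an isohedral monohedral tiling of the plane, i.e., a monohedral tiling whose symmetry group acts transitively on the tiles. -/

import Mathlib

open EuclideanGeometry

noncomputable section

/-- The Euclidean plane. -/
abbrev Plane : Type := EuclideanSpace ℝ (Fin 2)

/-- A convex polygon with `n` vertices: `n` points of the plane in strictly convex
position, labeled in cyclic order (each segment joining cyclically consecutive
vertices lies on the boundary of the convex hull). -/
structure ConvexPolygon (n : ℕ) [NeZero n] where
  V : Fin n → Plane
  strictlyConvex : ∀ i : Fin n, V i ∉ convexHull ℝ (V '' {j | j ≠ i})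
  cyclic : ∀ i : Fin n, segment ℝ (V i) (V (i + 1)) ⊆ frontier (convexHull ℝ (Set.range V))

namespace ConvexPolygon

variable {n : ℕ} [NeZero n]

/-- The polygon, as a subset of the plane (the convex hull of its vertices). -/
def carrier (P : ConvexPolygon n) : Set Plane := convexHull ℝ (Set.range P.V)

/-- The interior angle (in radians) at the `i`-th vertex. -/
def angle (P : ConvexPolygon n) (i : Fin n) : ℝ :=
  EuclideanGeometry.angle (P.V (i - 1)) (P.V i) (P.V (i + 1))

/-- The length of the side joining the `i`-th vertex to the next one. -/
def side (P : ConvexPolygon n) (i : Fin n) : ℝ := dist (P.V i) (P.V (i + 1))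

end ConvexPolygon

/-- A convex pentagon.  Its angles `A, B, C, D, E` are `angle 0, …, angle 4` and
its sides `a, b, c, d, e` are `side 0, …, side 4`. -/
abbrev ConvexPentagon := ConvexPolygon 5

/-- `t` is an isometric copy of `P`. -/
def IsIsometricCopy (t P : Set Plane) : Prop :=
  ∃ g : Plane ≃ᵢ Plane, t = g '' P

/-- `T` is a monohedral tiling of the plane by isometric copies of `P`:
the tiles cover the plane and have pairwise disjoint interiors. -/
def IsMonohedralTiling (P : Set Plane) (T : Set (Set Plane)) : Prop :=
  (∀ t ∈ T, IsIsometricCopy t P) ∧ ⋃₀ T = Set.univ ∧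
    T.Pairwise fun t s => interior t ∩ interior s = ∅

/-- `x` is a vertex (extreme point) of the convex polygonal tile `t`. -/
def IsVertexOf (x : Plane) (t : Set Plane) : Prop := x ∈ Set.extremePoints ℝ t

/-- `e` is an edge (a full side) of the convex polygonal tile `t`: a segment
joining two distinct vertices of `t` that lies on the boundary of `t`. -/
def IsEdgeOf (e t : Set Plane) : Prop :=
  ∃ x y : Plane, x ≠ y ∧ IsVertexOf x t ∧ IsVertexOf y t ∧
    e = segment ℝ x y ∧ e ⊆ frontier t

/-- A tiling by convex polygons is edge-to-edge if any two distinct tiles meet in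
the empty set, a common vertex, or a common edge. -/
def IsEdgeToEdge (T : Set (Set Plane)) : Prop :=
  ∀ t ∈ T, ∀ s ∈ T, t ≠ s →
    t ∩ s = ∅ ∨
    (∃ x : Plane, t ∩ s = {x} ∧ IsVertexOf x t ∧ IsVertexOf x s) ∨
    (∃ e : Set Plane, t ∩ s = e ∧ IsEdgeOf e t ∧ IsEdgeOf e s)

/-- A tiling is periodic if translations by two linearly independent vectors map
every tile onto a tile. -/
def IsPeriodic (T : Set (Set Plane)) : Prop :=
  ∃ u v : Plane, LinearIndependent ℝ ![u, v] ∧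
    (∀ t ∈ T, (fun x => x + u) '' t ∈ T) ∧ (∀ t ∈ T, (fun x => x + v) '' t ∈ T)

/-- An isometry is a symmetry of the tiling `T` if it maps the tiles of `T` onto
the tiles of `T`. -/
def IsSymmetryOf (g : Plane ≃ᵢ Plane) (T : Set (Set Plane)) : Prop :=
  (fun t => g '' t) '' T = T

/-- A tiling is isohedral if its symmetry group acts transitively on the tiles. -/
def IsIsohedral (T : Set (Set Plane)) : Prop :=
  ∀ t ∈ T, ∀ s ∈ T, ∃ g : Plane ≃ᵢ Plane, IsSymmetryOf g T ∧ g '' t = s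

/-- Two tiles are equivalent if some symmetry of the tiling maps one onto the other. -/
def SymEquiv (T : Set (Set Plane)) (t s : Set Plane) : Prop :=
  ∃ g : Plane ≃ᵢ Plane, IsSymmetryOf g T ∧ g '' t = s

/-- A direct (orientation-preserving) isometry of the plane: an affine isometry
whose linear part has positive determinant. -/
def IsDirectIsometry (g : Plane ≃ᵢ Plane) : Prop :=
  ∃ (L : Plane ≃ₗᵢ[ℝ] Plane) (w : Plane),
    0 < LinearMap.det (L.toLinearEquiv : Plane →ₗ[ℝ] Plane) ∧ ∀ x, g x = L x + w

/-- Relabeling of the vertices of a pentagon: a cyclic shift by `k`, with the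
orientation reversed when `r = true`. -/
def relabel (k : Fin 5) (r : Bool) (i : Fin 5) : Fin 5 := if r then k - i else k + i

/-!
If three consecutive interior angles `A`, `B`, `C` sum to `360°`, the sides `EA` and `CD` are
parallel, so the pentagon and its image under the half-turn about the midpoint of `DE` form a
centrally symmetric hexagon. This hexagon is the Voronoi cell of a planar lattice for a suitable
positive definite quadratic form, chosen so that the lattice is spanned by three vectors with sum
zero and pairwise negative inner products. Reducing a point to a nearest lattice point shows that
the translates of the hexagon cover the plane, and strictness of the inequalities that they do not
overlap. Cutting every hexagon along its diagonal `DE` gives the orbit of the pentagon under the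
group of the maps `z ↦ ± z + l`, `l` in the lattice, which is an isohedral tiling.
-/

section GroupTiling

variable {G : Subgroup (Plane ≃ᵢ Plane)} {S : Set Plane}

lemma IsMonohedralTiling.of_isIsometricCopy {P Q : Set Plane} {T : Set (Set Plane)}
    (hPQ : IsIsometricCopy P Q) (hT : IsMonohedralTiling P T) : IsMonohedralTiling Q T := by
  obtain ⟨h, rfl⟩ := hPQ
  refine ⟨fun t ht => ?_, hT.2⟩
  obtain ⟨g, rfl⟩ := hT.1 t ht
  exact ⟨h.trans g, (Set.image_image g h Q)⟩

/-- The family of images of a tile `S` under the isometries in a group `G`. -/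
def orbitTiles (G : Subgroup (Plane ≃ᵢ Plane)) (S : Set Plane) : Set (Set Plane) :=
  (fun g : Plane ≃ᵢ Plane => g '' S) '' (G : Set (Plane ≃ᵢ Plane))

lemma image_mul_eq (g h : Plane ≃ᵢ Plane) (S : Set Plane) : ⇑(g * h) '' S = g '' (h '' S) := by
  rw [IsometryEquiv.coe_mul, Set.image_comp]

lemma isSymmetryOf_orbitTiles {g : Plane ≃ᵢ Plane} (hg : g ∈ G) :
    IsSymmetryOf g (orbitTiles G S) := by
  ext t
  constructor
  · rintro ⟨_, ⟨h, hh, rfl⟩, rfl⟩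
    exact ⟨g * h, G.mul_mem hg hh, image_mul_eq g h S⟩
  · rintro ⟨h, hh, rfl⟩
    refine ⟨_, ⟨g⁻¹ * h, G.mul_mem (G.inv_mem hg) hh, rfl⟩, ?_⟩
    beta_reduce
    rw [← image_mul_eq, mul_inv_cancel_left]

lemma isIsohedral_orbitTiles (G : Subgroup (Plane ≃ᵢ Plane)) (S : Set Plane) :
    IsIsohedral (orbitTiles G S) := by
  rintro _ ⟨g, hg, rfl⟩ _ ⟨h, hh, rfl⟩
  refine ⟨h * g⁻¹, isSymmetryOf_orbitTiles (G.mul_mem hh (G.inv_mem hg)), ?_⟩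
  rw [← image_mul_eq, inv_mul_cancel_right]

lemma isMonohedralTiling_orbitTiles (hcover : ∀ z, ∃ g ∈ G, g z ∈ S)
    (hpack : ∀ g ∈ G, ∀ z ∈ interior S, g z ∈ interior S → g = 1) :
    IsMonohedralTiling S (orbitTiles G S) := by
  refine ⟨?_, Set.eq_univ_of_forall fun z => ?_, ?_⟩
  · rintro _ ⟨g, -, rfl⟩
    exact ⟨g, rfl⟩
  · obtain ⟨g, hg, hz⟩ := hcover z
    exact ⟨_, ⟨g⁻¹, G.inv_mem hg, rfl⟩, g z, hz, g.symm_apply_apply z⟩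
  · rintro _ ⟨g, hg, rfl⟩ _ ⟨h, hh, rfl⟩ hne
    refine Set.eq_empty_of_forall_notMem fun z hz => hne ?_
    have interior_image (k : Plane ≃ᵢ Plane) : interior (k '' S) = k '' interior S :=
      (k.toHomeomorph.image_interior S).symm
    simp only [interior_image] at hz
    obtain ⟨⟨x, hx, rfl⟩, y, hy, hyx⟩ := hz
    have hxy : (g⁻¹ * h) y = x := (congrArg g.symm hyx).trans (g.symm_apply_apply x)
    have hgh : g⁻¹ * h = 1 := hpack _ (G.mul_mem (G.inv_mem hg) hh) y hy (hxy ▸ hx)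
    rw [inv_mul_eq_one.1 hgh]

end GroupTiling

section CentralTile

variable {V W : Type*}

/-- A central tile of a translation lattice `L`: a prototile of a tiling under the group of the
translations `z ↦ z + l` and the half-turns `z ↦ -z + l` with `l ∈ L`. -/
structure IsCentralTile [AddCommGroup V] [TopologicalSpace V] (L : AddSubgroup V) (S : Set V) :
    Prop where
  covers : ∀ z, ∃ ε : ℤˣ, ∃ l ∈ L, ε • z + l ∈ S
  packs : ∀ z ∈ interior S, ∀ ε : ℤˣ, ∀ l ∈ L, ε • z + l ∈ interior S → ε = 1 ∧ l = 0

/-- The group of the isometries `z ↦ z + l` and `z ↦ -z + l` with `l ∈ L`. -/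
def centralGroup [SeminormedAddCommGroup V] (L : AddSubgroup V) : Subgroup (V ≃ᵢ V) where
  carrier := {g | ∃ ε : ℤˣ, ∃ l ∈ L, ∀ z, g z = ε • z + l}
  one_mem' := ⟨1, 0, L.zero_mem, fun z => by simp⟩
  mul_mem' := by
    rintro g h ⟨ε, l, hl, hg⟩ ⟨η, m, hm, hh⟩
    refine ⟨ε * η, ε • m + l, L.add_mem ?_ hl, fun z => ?_⟩
    · rw [Units.smul_def]
      exact L.zsmul_mem hm _
    · rw [IsometryEquiv.mul_apply, hg, hh, smul_add, mul_smul, add_assoc]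
  inv_mem' := by
    rintro g ⟨ε, l, hl, hg⟩
    refine ⟨ε⁻¹, ε⁻¹ • -l, ?_, fun z => g.injective ?_⟩
    · rw [Units.smul_def]
      exact L.zsmul_mem (L.neg_mem hl) _
    · rw [IsometryEquiv.apply_inv_self, hg, ← smul_add, smul_inv_smul, neg_add_cancel_right]

lemma exists_mem_centralGroup [SeminormedAddCommGroup V] {L : AddSubgroup V} (ε : ℤˣ) {l : V}
    (hl : l ∈ L) : ∃ g ∈ centralGroup L, ∀ z, g z = ε • z + l := by
  have hε : Isometry fun z : V => ε • z := Isometry.of_dist_eq fun x y => by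
    rcases Int.units_eq_one_or ε with rfl | rfl
    · simp only [one_smul]
    · simp only [Units.neg_smul, one_smul, dist_neg_neg]
  exact ⟨(IsometryEquiv.mk (MulAction.toPerm ε) hε).trans (IsometryEquiv.addRight l),
    ⟨ε, l, hl, fun _ => rfl⟩, fun _ => rfl⟩

lemma IsCentralTile.exists_isohedral_tiling {L : AddSubgroup Plane} {S : Set Plane}
    (h : IsCentralTile L S) : ∃ T, IsMonohedralTiling S T ∧ IsIsohedral T := by
  refine ⟨_, isMonohedralTiling_orbitTiles (G := centralGroup L) (fun z => ?_) ?_,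
    isIsohedral_orbitTiles _ _⟩
  · obtain ⟨ε, l, hl, hz⟩ := h.covers z
    obtain ⟨g, hg, hgz⟩ := exists_mem_centralGroup ε hl
    exact ⟨g, hg, hgz z ▸ hz⟩
  · rintro g ⟨ε, l, hl, hg⟩ z hz hgz
    obtain ⟨rfl, rfl⟩ := h.packs z hz ε l hl (hg z ▸ hgz)
    ext1 w
    simp [hg]

lemma IsCentralTile.image [NormedAddCommGroup V] [NormedSpace ℝ V] [NormedAddCommGroup W]
    [NormedSpace ℝ W] {L : AddSubgroup V} {S : Set V} (h : IsCentralTile L S) (e : V ≃L[ℝ] W) :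
    IsCentralTile (L.map (e : V →+ W)) (e '' S) := by
  have map_move (ε : ℤˣ) (z l : V) : ε • e z + e l = e (ε • z + l) := by
    simp [Units.smul_def]
  constructor
  · refine e.surjective.forall.2 fun z => ?_
    obtain ⟨ε, l, hl, hz⟩ := h.covers z
    exact ⟨ε, e l, ⟨l, hl, rfl⟩, _, hz, (map_move ε z l).symm⟩
  · rw [← e.coe_toHomeomorph, ← e.toHomeomorph.image_interior]
    rintro _ ⟨z, hz, rfl⟩ ε _ ⟨l, hl, rfl⟩ ⟨y, hy, hyz⟩
    have hyz' : y = ε • z + l := e.injective (hyz.trans (map_move ε z l))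
    obtain ⟨rfl, rfl⟩ := h.packs z hz ε l hl (hyz' ▸ hy)
    exact ⟨rfl, map_zero _⟩

lemma lt_of_mem_interior [AddCommGroup V] [Module ℝ V] [TopologicalSpace V] [ContinuousAdd V]
    [ContinuousSMul ℝ V] {f : V →ₗ[ℝ] ℝ} (hf : f ≠ 0) {S : Set V} {c : ℝ}
    (hS : ∀ y ∈ S, f y ≤ c) {x : V} (hx : x ∈ interior S) : f x < c := by
  obtain ⟨d, hd⟩ : ∃ d, f d = 1 := f.surjective hf 1
  have hlim : Filter.Tendsto (fun t : ℝ => x + t • d) (nhds 0) (nhds x) :=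
    Continuous.tendsto' (by fun_prop) _ _ (by simp)
  have hmem : ∀ᶠ t in nhdsWithin (0 : ℝ) (Set.Ioi 0), x + t • d ∈ S :=
    (hlim.mono_left nhdsWithin_le_nhds).eventually (mem_interior_iff_mem_nhds.1 hx)
  obtain ⟨t, ht, htS⟩ := (eventually_mem_nhdsWithin.and hmem).exists
  have := hS _ htS
  simp only [map_add, map_smul, hd, smul_eq_mul, mul_one] at this
  linarith [Set.mem_Ioi.1 ht]

lemma isCentralTile_inter_halfSpace [AddCommGroup V] [Module ℝ V] [TopologicalSpace V]
    [IsTopologicalAddGroup V] [ContinuousSMul ℝ V] {L : AddSubgroup V} {H : Set V} (hH : -H = H)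
    (hcover : ∀ z, ∃ l ∈ L, z + l ∈ H)
    (hpack : ∀ z ∈ interior H, ∀ l ∈ L, z + l ∈ interior H → l = 0)
    {f : V →ₗ[ℝ] ℝ} (hf : f ≠ 0) : IsCentralTile L (H ∩ {z | 0 ≤ f z}) := by
  have interior_pos {z : V} (hz : z ∈ interior (H ∩ {z | 0 ≤ f z})) : 0 < f z := by
    have := lt_of_mem_interior (neg_ne_zero.2 hf) (c := 0) (fun y hy => by simpa using hy.2) hz
    simpa using this
  have neg_interior {z : V} (hz : z ∈ interior H) : -z ∈ interior H := by
    rw [← hH]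
    simpa [← Homeomorph.coe_neg, ← Set.image_neg_eq_neg, ← Homeomorph.image_interior] using hz
  have interior_sub : interior (H ∩ {z | 0 ≤ f z}) ⊆ interior H :=
    interior_mono Set.inter_subset_left
  constructor
  · intro z
    obtain ⟨l, hl, hz⟩ := hcover z
    rcases le_total 0 (f (z + l)) with h | h
    · exact ⟨1, l, hl, by simpa using hz, by simpa using h⟩
    · refine ⟨-1, -l, L.neg_mem hl, ?_⟩
      have hzl : (-1 : ℤˣ) • z + -l = -(z + l) := by simp [Units.smul_def, add_comm]
      rw [hzl]
      exact ⟨by rwa [← hH, Set.neg_mem_neg], by simpa only [Set.mem_ofPred_eq, map_neg,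
        Left.nonneg_neg_iff] using h⟩
  · intro z hz ε l hl hzl
    rcases Int.units_eq_one_or ε with rfl | rfl
    · rw [one_smul] at hzl
      exact ⟨rfl, hpack z (interior_sub hz) l hl (interior_sub hzl)⟩
    · rw [Units.neg_smul, one_smul] at hzl
      obtain rfl := hpack _ (neg_interior (interior_sub hz)) l hl (interior_sub hzl)
      rw [add_zero] at hzl
      have := interior_pos hzl
      rw [map_neg] at this
      linarith [interior_pos hz]

end CentralTile

section ObtuseSuperbase

open LinearMap (BilinForm)

variable {V : Type*} [AddCommGroup V] [Module ℝ V]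

/-- An obtuse superbase (in Conway's terminology) of a planar lattice with respect to a quadratic
form: three generators with vanishing sum, any two of them at an obtuse angle. -/
structure IsObtuseSuperbase (B : BilinForm ℝ V) (v : Fin 3 → V) : Prop where
  isSymm : B.IsSymm
  sum_eq_zero : ∑ i, v i = 0
  neg : ∀ i j, i ≠ j → B (v i) (v j) < 0

/-- The points which, with respect to the quadratic form of `B`, are at least as close to `0` as
to each of the points `± v i`.  For an obtuse superbase `v` of a lattice this is the Voronoi cell
of `0` in that lattice. -/
def voronoiHexagon (B : BilinForm ℝ V) (v : Fin 3 → V) : Set V :=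
  {x | ∀ i, 2 * |B (v i) x| ≤ B (v i) (v i)}

lemma neg_voronoiHexagon (B : BilinForm ℝ V) (v : Fin 3 → V) :
    -voronoiHexagon B v = voronoiHexagon B v := by
  ext x
  simp only [voronoiHexagon, Set.mem_neg, Set.mem_ofPred_eq, map_neg, abs_neg]

lemma convex_voronoiHexagon (B : BilinForm ℝ V) (v : Fin 3 → V) :
    Convex ℝ (voronoiHexagon B v) := by
  intro x hx y hy a b ha hb hab i
  have habs : |B (v i) (a • x + b • y)| ≤ a * |B (v i) x| + b * |B (v i) y| := by
    simpa [abs_mul, abs_of_nonneg, ha, hb] using abs_add_le (a * B (v i) x) (b * B (v i) y)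
  calc 2 * |B (v i) (a • x + b • y)| ≤ a * (2 * |B (v i) x|) + b * (2 * |B (v i) y|) := by linarith
    _ ≤ a * B (v i) (v i) + b * B (v i) (v i) := by gcongr <;> apply_assumption
    _ = B (v i) (v i) := by rw [← add_mul, hab, one_mul]

lemma apply_sub_self_of_isSymm {B : BilinForm ℝ V} (hB : B.IsSymm) (x y : V) :
    B (x - y) (x - y) = B x x - 2 * B y x + B y y := by
  simp only [map_sub, LinearMap.sub_apply, hB.eq x y]
  ring

lemma finite_setOf_quadratic_le {α β : ℝ} (hα : 0 < α) (hβ : 0 < β) (s t M : ℝ) :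
    {a : ℤ × ℤ | α * (s - a.1) ^ 2 + β * (t - a.2) ^ 2 ≤ M}.Finite := by
  have finite_sq_le (s M : ℝ) : {a : ℤ | (s - a) ^ 2 ≤ M}.Finite := by
    refine (Set.finite_Icc ⌈s - √M⌉ ⌊s + √M⌋).subset fun a ha => ?_
    rw [Set.mem_ofPred_eq] at ha
    have := abs_le.1 (Real.abs_le_sqrt ha)
    exact ⟨Int.ceil_le.2 (by linarith), Int.le_floor.2 (by linarith)⟩
  refine ((finite_sq_le s (M / α)).prod (finite_sq_le t (M / β))).subset fun a ha => ?_
  have hs : 0 ≤ α * (s - a.1) ^ 2 := by positivity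
  have ht : 0 ≤ β * (t - a.2) ^ 2 := by positivity
  rw [Set.mem_ofPred_eq] at ha
  exact ⟨(le_div_iff₀' hα).2 (by linarith), (le_div_iff₀' hβ).2 (by linarith)⟩

namespace IsObtuseSuperbase

variable {B : BilinForm ℝ V} {v : Fin 3 → V}

lemma sum_apply_eq_zero (h : IsObtuseSuperbase B v) (x : V) : ∑ i, B (v i) x = 0 := by
  rw [← LinearMap.sum_apply, ← map_sum, h.sum_eq_zero, map_zero, LinearMap.zero_apply]

lemma apply_self_pos (h : IsObtuseSuperbase B v) (i : Fin 3) : 0 < B (v i) (v i) := by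
  have hsum := h.sum_apply_eq_zero (v i)
  rw [← Finset.add_sum_erase _ _ (Finset.mem_univ i)] at hsum
  have hneg : ∑ j ∈ Finset.univ.erase i, B (v j) (v i) < 0 :=
    Finset.sum_neg (fun j hj => h.neg j i (Finset.ne_of_mem_erase hj)) ⟨i + 1, by simp⟩
  linarith

lemma sum_sub_smul (h : IsObtuseSuperbase B v) {R : Type*} [Ring R] [Module R V]
    (a : Fin 3 → R) (c : R) : ∑ i, (a i - c) • v i = ∑ i, a i • v i := by
  simp only [sub_smul, Finset.sum_sub_distrib, ← Finset.smul_sum, h.sum_eq_zero, smul_zero,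
    sub_zero]

lemma exists_eq_nsmul_sub_nsmul (h : IsObtuseSuperbase B v) {l : V}
    (hl : l ∈ AddSubgroup.closure (Set.range v)) :
    ∃ i k, i ≠ k ∧ ∃ m n : ℕ, l = m • v i - n • v k := by
  obtain ⟨a, rfl⟩ := AddSubgroup.mem_closure_range_iff_of_fintype.1 hl
  set σ := Tuple.sort a
  have hmono : Monotone (a ∘ σ) := Tuple.monotone_sort a
  obtain ⟨n, hn⟩ := Int.eq_ofNat_of_zero_le (sub_nonneg.2 (hmono (Fin.zero_le 1)))
  obtain ⟨m, hm⟩ := Int.eq_ofNat_of_zero_le (sub_nonneg.2 (hmono (Fin.le_last 1)))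
  refine ⟨σ 2, σ 0, σ.injective.ne (by decide), m, n, ?_⟩
  rw [← h.sum_sub_smul a (a (σ 1)), ← Equiv.sum_comp σ, Fin.sum_univ_three, sub_self, zero_smul,
    add_zero, ← natCast_zsmul, ← natCast_zsmul, ← hn, ← hm, add_comm, sub_eq_add_neg _ (_ • _),
    ← neg_smul, neg_sub]
  rfl

/-- Every lattice vector is a sum of multiples, by natural numbers, of two of the vectors `± v i`
at an acute angle, so that the strict inequalities for these two add up. -/
lemma two_mul_apply_lt (h : IsObtuseSuperbase B v) {x : V}
    (hx : ∀ i, 2 * |B (v i) x| < B (v i) (v i)) {l : V}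
    (hl : l ∈ AddSubgroup.closure (Set.range v)) (hl0 : l ≠ 0) : 2 * B l x < B l l := by
  obtain ⟨i, k, hik, m, n, rfl⟩ := h.exists_eq_nsmul_sub_nsmul hl
  have multiple_le {t Q : ℝ} (ht : t < Q) (hQ : 0 < Q) (r : ℕ) :
      r * t ≤ r ^ 2 * Q ∧ (r ≠ 0 → r * t < r ^ 2 * Q) := by
    rcases r.eq_zero_or_pos with rfl | hr
    · simp
    · have hr1 : (1 : ℝ) ≤ r := by exact_mod_cast hr
      have htr : t < r * Q := ht.trans_le (le_mul_of_one_le_left hQ.le hr1)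
      have : (r : ℝ) * t < r ^ 2 * Q := by
        rw [sq, mul_assoc]
        gcongr
      exact ⟨this.le, fun _ => this⟩
  have hi := multiple_le (by linarith [hx i, le_abs_self (B (v i) x)]) (h.apply_self_pos i) m
    (t := 2 * B (v i) x)
  have hk := multiple_le (by linarith [hx k, neg_abs_le (B (v k) x)]) (h.apply_self_pos k) n
    (t := -(2 * B (v k) x))
  have hcross : 0 ≤ -(2 * (m * n) * B (v k) (v i)) :=
    neg_nonneg.2 (mul_nonpos_of_nonneg_of_nonpos (by positivity) (h.neg k i hik.symm).le)
  have hmn : m ≠ 0 ∨ n ≠ 0 := by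
    by_contra! hmn
    simp [hmn] at hl0
  have hQ : B (m • v i - n • v k) (m • v i - n • v k) =
      m ^ 2 * B (v i) (v i) - 2 * (m * n) * B (v k) (v i) + n ^ 2 * B (v k) (v k) := by
    rw [apply_sub_self_of_isSymm h.isSymm]
    simp only [← Nat.cast_smul_eq_nsmul ℝ, map_smul, LinearMap.smul_apply, smul_eq_mul]
    ring
  have hBx : 2 * B (m • v i - n • v k) x = m * (2 * B (v i) x) + n * -(2 * B (v k) x) := by
    simp only [← Nat.cast_smul_eq_nsmul ℝ, map_sub, map_smul, LinearMap.sub_apply,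
      LinearMap.smul_apply, smul_eq_mul]
    ring
  rw [hQ, hBx]
  rcases hmn with hm | hn
  · linarith [hi.2 hm]
  · linarith [hk.2 hn]

lemma eq_zero_of_add_mem (h : IsObtuseSuperbase B v) {x l : V}
    (hx : ∀ i, 2 * |B (v i) x| < B (v i) (v i))
    (hl : l ∈ AddSubgroup.closure (Set.range v))
    (hxl : ∀ i, 2 * |B (v i) (x + l)| < B (v i) (v i)) : l = 0 := by
  by_contra hl0
  have hneg := h.two_mul_apply_lt hx (neg_mem hl) (neg_ne_zero.2 hl0)
  have hpos := h.two_mul_apply_lt hxl hl hl0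
  simp only [map_add, map_neg, LinearMap.neg_apply, neg_neg] at hneg hpos
  linarith

lemma mem_voronoiHexagon_of_forall_le (h : IsObtuseSuperbase B v) {x : V}
    (hx : ∀ l ∈ AddSubgroup.closure (Set.range v), B x x ≤ B (x - l) (x - l)) :
    x ∈ voronoiHexagon B v := by
  intro i
  have hv : v i ∈ AddSubgroup.closure (Set.range v) := AddSubgroup.subset_closure ⟨i, rfl⟩
  have hpos := hx _ hv
  have hneg := hx _ (neg_mem hv)
  rw [apply_sub_self_of_isSymm h.isSymm] at hpos hneg
  simp only [map_neg, LinearMap.neg_apply, neg_neg] at hneg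
  rw [← abs_two, ← abs_mul, abs_le]
  constructor <;> linarith

lemma selling_formula (h : IsObtuseSuperbase B v) (s t : ℝ) :
    B (s • v 0 + t • v 1) (s • v 0 + t • v 1) =
      -B (v 0) (v 1) * (s - t) ^ 2 - B (v 2) (v 1) * t ^ 2 - B (v 2) (v 0) * s ^ 2 := by
  have h0 := h.sum_apply_eq_zero (v 0)
  have h1 := h.sum_apply_eq_zero (v 1)
  have h10 := h.isSymm.eq (v 0) (v 1)
  simp only [Fin.sum_univ_three] at h0 h1
  simp only [map_add, map_smul, LinearMap.add_apply, LinearMap.smul_apply, smul_eq_mul]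
  linear_combination s ^ 2 * h0 + t ^ 2 * h1 + (s ^ 2 - s * t) * h10

lemma exists_eq_smul_add_smul (h : IsObtuseSuperbase B v) {x : V}
    (hx : x ∈ Submodule.span ℝ (Set.range v)) : ∃ s t : ℝ, x = s • v 0 + t • v 1 := by
  obtain ⟨a, rfl⟩ := (Submodule.mem_span_range_iff_exists_fun ℝ).1 hx
  refine ⟨a 0 - a 2, a 1 - a 2, ?_⟩
  rw [← h.sum_sub_smul a (a 2), Fin.sum_univ_three, sub_self, zero_smul, add_zero]

lemma exists_eq_zsmul_add_zsmul (h : IsObtuseSuperbase B v) {l : V}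
    (hl : l ∈ AddSubgroup.closure (Set.range v)) : ∃ m n : ℤ, l = m • v 0 + n • v 1 := by
  obtain ⟨a, rfl⟩ := AddSubgroup.mem_closure_range_iff_of_fintype.1 hl
  refine ⟨a 0 - a 2, a 1 - a 2, ?_⟩
  rw [← h.sum_sub_smul a (a 2), Fin.sum_univ_three, sub_self, zero_smul, add_zero]

lemma exists_forall_apply_sub_le (h : IsObtuseSuperbase B v)
    (hspan : Submodule.span ℝ (Set.range v) = ⊤) (x : V) :
    ∃ l ∈ AddSubgroup.closure (Set.range v),
      ∀ l' ∈ AddSubgroup.closure (Set.range v), B (x - l) (x - l) ≤ B (x - l') (x - l') := by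
  obtain ⟨s, t, rfl⟩ := h.exists_eq_smul_add_smul (hspan ▸ Submodule.mem_top : x ∈ _)
  set l : ℤ × ℤ → V := fun a => a.1 • v 0 + a.2 • v 1
  set Q : ℤ × ℤ → ℝ := fun a => B (s • v 0 + t • v 1 - l a) (s • v 0 + t • v 1 - l a)
  have le_Q (a : ℤ × ℤ) :
      -B (v 2) (v 0) * (s - a.1) ^ 2 + -B (v 2) (v 1) * (t - a.2) ^ 2 ≤ Q a := by
    have hsub : s • v 0 + t • v 1 - l a = (s - a.1) • v 0 + (t - a.2) • v 1 := by
      simp only [l]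
      module
    have h01 := mul_nonneg (neg_pos.2 (h.neg 0 1 (by decide))).le (sq_nonneg (s - a.1 - (t - a.2)))
    simp only [Q, hsub, h.selling_formula]
    linarith
  have hfin : {a | Q a ≤ Q 0}.Finite :=
    (finite_setOf_quadratic_le (neg_pos.2 (h.neg 2 0 (by decide)))
      (neg_pos.2 (h.neg 2 1 (by decide))) s t (Q 0)).subset fun a ha => (le_Q a).trans ha
  obtain ⟨a, ha, hmin⟩ := Set.exists_min_image _ Q hfin ⟨0, le_refl (Q 0)⟩
  refine ⟨l a, ?_, fun l' hl' => ?_⟩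
  · have hv (i : Fin 3) : v i ∈ AddSubgroup.closure (Set.range v) :=
      AddSubgroup.subset_closure ⟨i, rfl⟩
    exact add_mem (zsmul_mem (hv 0) _) (zsmul_mem (hv 1) _)
  · obtain ⟨m, n, rfl⟩ := h.exists_eq_zsmul_add_zsmul hl'
    exact (le_total (Q (m, n)) (Q 0)).elim (hmin (m, n)) (le_trans ha)

lemma exists_add_mem_voronoiHexagon (h : IsObtuseSuperbase B v)
    (hspan : Submodule.span ℝ (Set.range v) = ⊤) (x : V) :
    ∃ l ∈ AddSubgroup.closure (Set.range v), x + l ∈ voronoiHexagon B v := by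
  obtain ⟨l, hl, hmin⟩ := h.exists_forall_apply_sub_le hspan x
  refine ⟨-l, neg_mem hl, h.mem_voronoiHexagon_of_forall_le fun l' hl' => ?_⟩
  rw [← sub_eq_add_neg, sub_sub]
  exact hmin _ (add_mem hl hl')

lemma two_mul_abs_lt_of_mem_interior [TopologicalSpace V] [ContinuousAdd V] [ContinuousSMul ℝ V]
    (h : IsObtuseSuperbase B v) {x : V} (hx : x ∈ interior (voronoiHexagon B v)) (i : Fin 3) :
    2 * |B (v i) x| < B (v i) (v i) := by
  have hBi : B (v i) ≠ 0 := fun h0 => (h.apply_self_pos i).ne' (by rw [h0, LinearMap.zero_apply])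
  have hle (y : V) (hy : y ∈ voronoiHexagon B v) : |B (v i) y| ≤ B (v i) (v i) / 2 := by
    linarith [hy i]
  have hpos := lt_of_mem_interior hBi (fun y hy => (le_abs_self _).trans (hle y hy)) hx
  have hneg := lt_of_mem_interior (neg_ne_zero.2 hBi)
    (fun y hy => (neg_le_abs _).trans (hle y hy)) hx
  rw [LinearMap.neg_apply] at hneg
  linarith [abs_lt.2 ⟨neg_lt.1 hneg, hpos⟩]

lemma isCentralTile_inter_halfSpace [TopologicalSpace V] [IsTopologicalAddGroup V]
    [ContinuousSMul ℝ V] (h : IsObtuseSuperbase B v)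
    (hspan : Submodule.span ℝ (Set.range v) = ⊤) {f : V →ₗ[ℝ] ℝ} (hf : f ≠ 0) :
    IsCentralTile (AddSubgroup.closure (Set.range v)) (voronoiHexagon B v ∩ {x | 0 ≤ f x}) :=
  _root_.isCentralTile_inter_halfSpace (neg_voronoiHexagon B v)
    (h.exists_add_mem_voronoiHexagon hspan)
    (fun _ hx _ hl hxl => h.eq_zero_of_add_mem (h.two_mul_abs_lt_of_mem_interior hx) hl
      (h.two_mul_abs_lt_of_mem_interior hxl)) hf

end IsObtuseSuperbase

end ObtuseSuperbase

section SellingForm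

open LinearMap (BilinForm)

variable {V : Type*} [AddCommGroup V] [Module ℝ V]

/-- The form `∑ k, α k * ω (v k) x * ω (v k) y`, where `ω` is an area form on the plane.  By
Selling's formula, every form for which `v` is an obtuse superbase arises in this way from
positive weights `α`. -/
def sellingForm (ω : BilinForm ℝ V) (α : Fin 3 → ℝ) (v : Fin 3 → V) : BilinForm ℝ V :=
  ∑ k, α k • BilinForm.linMulLin (ω (v k)) (ω (v k))

variable {ω : BilinForm ℝ V} {α : Fin 3 → ℝ} {v : Fin 3 → V}

lemma sellingForm_apply (x y : V) :
    sellingForm ω α v x y = ∑ k, α k * (ω (v k) x * ω (v k) y) := by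
  simp [sellingForm]

lemma isSymm_sellingForm : (sellingForm ω α v).IsSymm :=
  ⟨fun x y => by simp only [sellingForm_apply, mul_comm (ω _ x)]⟩

lemma apply_succ_eq_of_sum_eq_zero (hω : ω.IsAlt) (hv : ∑ i, v i = 0) (i : Fin 3) :
    ω (v i) (v (i + 1)) = ω (v 0) (v 1) := by
  have h1 : ω (v 0) (v 1) + ω (v 0) (v 2) = 0 := by
    simpa [Fin.sum_univ_three, hω.self_eq_zero] using congrArg (ω (v 0)) hv
  have h2 : ω (v 2) (v 0) + ω (v 2) (v 1) = 0 := by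
    simpa [Fin.sum_univ_three, hω.self_eq_zero] using congrArg (ω (v 2)) hv
  have h02 := hω.neg_eq (v 0) (v 2)
  have h12 := hω.neg_eq (v 1) (v 2)
  fin_cases i <;> simp <;> linarith

lemma sellingForm_superbase_apply (hω : ω.IsAlt) (hv : ∑ i, v i = 0) (i : Fin 3) (x : V) :
    sellingForm ω α v (v i) x =
      ω (v 0) (v 1) * (α (i + 2) * ω (v (i + 2)) x - α (i + 1) * ω (v (i + 1)) x) := by
  have h1 : ω (v (i + 1)) (v i) = -ω (v 0) (v 1) := by
    rw [← hω.neg_eq, apply_succ_eq_of_sum_eq_zero hω hv]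
  have h2 : ω (v (i + 2)) (v i) = ω (v 0) (v 1) := by
    rw [← apply_succ_eq_of_sum_eq_zero hω hv (i + 2),
      (by decide : ∀ i : Fin 3, i + 2 + 1 = i) i]
  rw [sellingForm_apply, ← Equiv.sum_comp (Equiv.addLeft i), Fin.sum_univ_three]
  simp only [Equiv.coe_addLeft, add_zero, hω.self_eq_zero, h1, h2]
  ring

lemma isObtuseSuperbase_sellingForm (hω : ω.IsAlt) (hv : ∑ i, v i = 0) (h01 : ω (v 0) (v 1) ≠ 0)
    (hα : ∀ k, 0 < α k) : IsObtuseSuperbase (sellingForm ω α v) v where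
  isSymm := isSymm_sellingForm
  sum_eq_zero := hv
  neg := by
    have neg_succ (i : Fin 3) : sellingForm ω α v (v i) (v (i + 1)) < 0 := by
      have h2 : ω (v (i + 2)) (v (i + 1)) = -ω (v 0) (v 1) := by
        rw [← hω.neg_eq, ← (by decide : ∀ i : Fin 3, i + 1 + 1 = i + 2) i,
          apply_succ_eq_of_sum_eq_zero hω hv]
      rw [sellingForm_superbase_apply hω hv, h2, hω.self_eq_zero]
      nlinarith [mul_pos (hα (i + 2)) (sq_pos_of_ne_zero h01)]
    intro i j hij
    obtain rfl | rfl : j = i + 1 ∨ i = j + 1 := by decide +revert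
    · exact neg_succ i
    · exact isSymm_sellingForm.eq (v j) _ ▸ neg_succ j

end SellingForm

section NormalPentagon

/-- The convex hull of `A = (-1, 1)`, `B = (p, q)`, `C = (1, c)`, `D = (1, 0)`, `E = (-1, 0)`, to
which every pentagon with `A + B + C = 360°` is affinely equivalent. -/
def normalPentagon (p q c : ℝ) : Set (ℝ × ℝ) :=
  convexHull ℝ {(-1, 1), (p, q), (1, c), (1, 0), (-1, 0)}

lemma mem_of_convex_of_under_chord {K : Set (ℝ × ℝ)} (hK : Convex ℝ K) {a b s t x y : ℝ}
    (hab : a < b) (ha : (a, 0) ∈ K) (hb : (b, 0) ∈ K) (hs : (a, s) ∈ K) (ht : (b, t) ∈ K)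
    (hax : a ≤ x) (hxb : x ≤ b) (hy : 0 ≤ y) (hle : (b - a) * y ≤ (b - x) * s + (x - a) * t) :
    (x, y) ∈ K := by
  have hba : 0 < b - a := sub_pos.2 hab
  have mem_chord {s t : ℝ} (hs : (a, s) ∈ K) (ht : (b, t) ∈ K) :
      (x, ((b - x) * s + (x - a) * t) / (b - a)) ∈ K := by
    convert hK hs ht (div_nonneg (sub_nonneg.2 hxb) hba.le) (div_nonneg (sub_nonneg.2 hax) hba.le)
      (by field_simp; ring) using 1
    simp only [Prod.smul_mk, Prod.mk_add_mk, smul_eq_mul, Prod.mk.injEq]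
    exact ⟨by field_simp; ring, by field_simp⟩
  have hseg := hK.segment_subset (mem_chord ha hb) (mem_chord hs ht)
  have hle' := (le_div_iff₀' hba).2 hle
  simp only [mul_zero, add_zero, zero_div] at hseg
  rw [← Prod.image_mk_segment_right, segment_eq_Icc (hy.trans hle')] at hseg
  exact hseg ⟨y, ⟨hy, hle'⟩, rfl⟩

/-- The area form `ω(z, w) = z₁ w₂ - z₂ w₁` on `ℝ × ℝ`. -/
def crossForm : LinearMap.BilinForm ℝ (ℝ × ℝ) :=
  LinearMap.mk₂ ℝ (fun z w => z.1 * w.2 - z.2 * w.1) (fun _ _ _ => by simp; ring)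
    (fun _ _ _ => by simp; ring) (fun _ _ _ => by simp; ring) (fun _ _ _ => by simp; ring)

lemma crossForm_apply (z w : ℝ × ℝ) : crossForm z w = z.1 * w.2 - z.2 * w.1 := rfl

lemma isAlt_crossForm : crossForm.IsAlt := fun z => by rw [crossForm_apply]; ring

/-- The translation vectors `C - A`, `A + B`, `-(B + C)`, which match opposite sides of the
hexagon formed by the normal pentagon and its image under the half-turn about the origin. -/
def normalSuperbase (p q c : ℝ) : Fin 3 → ℝ × ℝ :=
  ![(2, c - 1), (p - 1, q + 1), (-(p + 1), -(q + c))]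

/-- Weights for which the lines spanned by the sides of the hexagon become the perpendicular
bisectors between the origin and the points `± normalSuperbase p q c i`. -/
def normalWeight (p q c : ℝ) : Fin 3 → ℝ :=
  ![(1 - p) * (1 + p) * (1 + c), (1 + p) * (2 * q - (1 - p) - (1 + p) * c),
    (1 - p) * (2 * q - (1 - p) - (1 + p) * c)]

/-- The quadratic form for which the hexagon formed by the normal pentagon and its image under the
half-turn about the origin is a Voronoi cell. -/
def normalForm (p q c : ℝ) : LinearMap.BilinForm ℝ (ℝ × ℝ) :=
  sellingForm crossForm (normalWeight p q c) (normalSuperbase p q c)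

variable {p q c : ℝ}

lemma sum_normalSuperbase (p q c : ℝ) : ∑ i, normalSuperbase p q c i = 0 := by
  ext <;> simp [normalSuperbase, Fin.sum_univ_three] <;> ring

lemma crossForm_normalSuperbase (p q c : ℝ) :
    crossForm (normalSuperbase p q c 0) (normalSuperbase p q c 1) =
      2 * q + (1 + p) + (1 - p) * c := by
  simp only [crossForm_apply, normalSuperbase, Matrix.cons_val_zero, Matrix.cons_val_one]
  ring

lemma normalForm_apply (p q c : ℝ) (i : Fin 3) (z : ℝ × ℝ) :
    normalForm p q c (normalSuperbase p q c i) z =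
      (2 * q + (1 + p) + (1 - p) * c) *
        (normalWeight p q c (i + 2) * crossForm (normalSuperbase p q c (i + 2)) z -
          normalWeight p q c (i + 1) * crossForm (normalSuperbase p q c (i + 1)) z) := by
  rw [normalForm, sellingForm_superbase_apply isAlt_crossForm (sum_normalSuperbase p q c),
    crossForm_normalSuperbase]

lemma normalForm_superbase_zero (z : ℝ × ℝ) :
    normalForm p q c (normalSuperbase p q c 0) z =
      (2 * q - (1 - p) - (1 + p) * c) * (2 * q + (1 + p) + (1 - p) * c) ^ 2 * z.1 := by
  rw [normalForm_apply]
  simp only [normalWeight, Fin.isValue, zero_add, Matrix.cons_val, normalSuperbase, neg_add_rev,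
    crossForm_apply, Matrix.cons_val_one, Matrix.cons_val_zero]
  ring

lemma normalForm_superbase_one (z : ℝ × ℝ) :
    normalForm p q c (normalSuperbase p q c 1) z =
      (1 - p) * (2 * q + (1 + p) + (1 - p) * c) ^ 2 * ((1 + p) * z.2 - (q - 1) * z.1) := by
  rw [normalForm_apply]
  simp only [normalWeight, Fin.isValue, Fin.reduceAdd, Matrix.cons_val_zero, normalSuperbase,
    neg_add_rev, crossForm_apply, Matrix.cons_val]
  ring

lemma normalForm_superbase_two (z : ℝ × ℝ) :
    normalForm p q c (normalSuperbase p q c 2) z =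
      (1 + p) * (2 * q + (1 + p) + (1 - p) * c) ^ 2 * -((1 - p) * z.2 + (q - c) * z.1) := by
  rw [normalForm_apply]
  simp only [normalWeight, Fin.isValue, Fin.reduceAdd, Matrix.cons_val_one, Matrix.cons_val_zero,
    normalSuperbase, neg_add_rev, crossForm_apply]
  ring

lemma mem_voronoiHexagon_normalForm_iff (hp : -1 < p) (hp' : p < 1) (hc : 0 < c)
    (hq : (1 - p) + (1 + p) * c < 2 * q) {z : ℝ × ℝ} :
    z ∈ voronoiHexagon (normalForm p q c) (normalSuperbase p q c) ↔ |z.1| ≤ 1 ∧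
      |(1 + p) * z.2 - (q - 1) * z.1| ≤ q + p ∧ |(1 - p) * z.2 + (q - c) * z.1| ≤ q - p * c := by
  have h1p : 0 < 1 + p := by linarith
  have hp1 : 0 < 1 - p := by linarith
  have hδ : 0 < 2 * q - (1 - p) - (1 + p) * c := by linarith
  have hΔ : 0 < (2 * q + (1 + p) + (1 - p) * c) ^ 2 := pow_pos (by nlinarith) 2
  have abs_le_iff {k s t u : ℝ} (hk : 0 < k) (hu : u = 2 * t) :
      2 * |k * s| ≤ k * u ↔ |s| ≤ t := by
    rw [hu, abs_mul, abs_of_pos hk, mul_left_comm, mul_le_mul_iff_right₀ hk,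
      mul_le_mul_iff_right₀ two_pos]
  rw [voronoiHexagon, Set.mem_ofPred_eq, Fin.forall_fin_succ, Fin.forall_fin_two]
  refine and_congr ?_ (and_congr ?_ ?_)
  · rw [normalForm_superbase_zero, normalForm_superbase_zero]
    exact abs_le_iff (mul_pos hδ hΔ) (by simp [normalSuperbase])
  · change 2 * |normalForm p q c (normalSuperbase p q c 1) z| ≤
      normalForm p q c (normalSuperbase p q c 1) (normalSuperbase p q c 1) ↔ _
    rw [normalForm_superbase_one, normalForm_superbase_one]
    exact abs_le_iff (mul_pos hp1 hΔ) (by simp [normalSuperbase]; ring)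
  · change 2 * |normalForm p q c (normalSuperbase p q c 2) z| ≤
      normalForm p q c (normalSuperbase p q c 2) (normalSuperbase p q c 2) ↔ _
    rw [normalForm_superbase_two, normalForm_superbase_two, ← abs_neg ((1 - p) * z.2 + _)]
    exact abs_le_iff (mul_pos h1p hΔ) (by simp [normalSuperbase]; ring)

lemma normalPentagon_eq_inter (hp : -1 < p) (hp' : p < 1) (hc : 0 < c)
    (hq : (1 - p) + (1 + p) * c < 2 * q) :
    normalPentagon p q c = voronoiHexagon (normalForm p q c) (normalSuperbase p q c) ∩
      {z | 0 ≤ LinearMap.snd ℝ ℝ ℝ z} := by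
  have hcp : 0 < (1 + p) * c := by nlinarith
  refine Set.Subset.antisymm ?_ fun ⟨x, y⟩ ⟨hxy, hy⟩ => ?_
  · refine convexHull_min ?_ ((convex_voronoiHexagon _ _).inter
      (convex_halfSpace_ge (LinearMap.snd ℝ ℝ ℝ).isLinear 0))
    simp only [Set.insert_subset_iff, Set.singleton_subset_iff, Set.mem_inter_iff,
      Set.mem_ofPred_eq, mem_voronoiHexagon_normalForm_iff hp hp' hc hq, LinearMap.snd_apply,
      abs_le]
    refine ⟨?_, ?_, ?_, ?_, ?_⟩ <;> refine ⟨⟨?_, ?_, ?_⟩, ?_⟩ <;> (try constructor) <;> nlinarith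
  · obtain ⟨hx, hAB, hBC⟩ := (mem_voronoiHexagon_normalForm_iff hp hp' hc hq).1 hxy
    obtain ⟨hx, hx'⟩ := abs_le.1 hx
    have hAB := le_of_abs_le hAB
    have hBC := le_of_abs_le hBC
    set K := normalPentagon p q c
    have hconv : Convex ℝ K := convex_convexHull ℝ _
    have hsub : {(-1, 1), (p, q), (1, c), (1, 0), (-1, 0)} ⊆ K := subset_convexHull ℝ _
    simp only [Set.insert_subset_iff, Set.singleton_subset_iff] at hsub
    obtain ⟨hA, hB, hC, hD, hE⟩ := hsub
    have hp0 : (p, 0) ∈ K := mem_of_convex_of_under_chord hconv (by norm_num) hE hD hE hD hp.le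
      hp'.le le_rfl (by simp)
    rcases le_total x p with hxp | hpx
    · exact mem_of_convex_of_under_chord hconv hp hE hp0 hA hB hx hxp hy (by linarith)
    · exact mem_of_convex_of_under_chord hconv hp' hp0 hD hB hC hpx hx' hy (by linarith)

lemma span_range_eq_top_of_crossForm_ne_zero {ι : Type*} {v : ι → ℝ × ℝ} {i j : ι}
    (h : crossForm (v i) (v j) ≠ 0) : Submodule.span ℝ (Set.range v) = ⊤ := by
  refine Submodule.eq_top_iff'.2 fun z => (Submodule.smul_mem_iff _ h).1 ?_
  have cramer : crossForm (v i) (v j) • z = crossForm z (v j) • v i + crossForm (v i) z • v j := by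
    ext <;> simp only [crossForm_apply, Prod.fst_add, Prod.snd_add, Prod.smul_fst, Prod.smul_snd,
      smul_eq_mul] <;> ring
  rw [cramer]
  exact add_mem (Submodule.smul_mem _ _ (Submodule.subset_span ⟨i, rfl⟩))
    (Submodule.smul_mem _ _ (Submodule.subset_span ⟨j, rfl⟩))

lemma normalWeight_pos (hp : -1 < p) (hp' : p < 1) (hc : 0 < c)
    (hq : (1 - p) + (1 + p) * c < 2 * q) : ∀ k, 0 < normalWeight p q c k := by
  have h1p : 0 < 1 + p := by linarith
  have hp1 : 0 < 1 - p := by linarith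
  have hδ : 0 < 2 * q - (1 - p) - (1 + p) * c := by linarith
  rw [Fin.forall_fin_succ, Fin.forall_fin_two]
  exact ⟨mul_pos (mul_pos hp1 h1p) (by linarith), mul_pos h1p hδ, mul_pos hp1 hδ⟩

lemma isCentralTile_normalPentagon (hp : -1 < p) (hp' : p < 1) (hc : 0 < c)
    (hq : (1 - p) + (1 + p) * c < 2 * q) :
    IsCentralTile (AddSubgroup.closure (Set.range (normalSuperbase p q c)))
      (normalPentagon p q c) := by
  have hΔ : crossForm (normalSuperbase p q c 0) (normalSuperbase p q c 1) ≠ 0 := by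
    rw [crossForm_normalSuperbase]
    nlinarith
  have hsnd : LinearMap.snd ℝ ℝ ℝ ≠ 0 := fun h => by simpa using LinearMap.congr_fun h (0, 1)
  rw [normalPentagon_eq_inter hp hp' hc hq]
  have hbase : IsObtuseSuperbase (normalForm p q c) (normalSuperbase p q c) :=
    isObtuseSuperbase_sellingForm isAlt_crossForm (sum_normalSuperbase p q c) hΔ
      (normalWeight_pos hp hp' hc hq)
  exact hbase.isCentralTile_inter_halfSpace (span_range_eq_top_of_crossForm_ne_zero hΔ) hsnd

end NormalPentagon

section AreaForm

open Module

variable {V : Type*} [NormedAddCommGroup V] [InnerProductSpace ℝ V] [Fact (finrank ℝ V = 2)]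
  (o : Orientation ℝ V (Fin 2))

lemma sign_oangle_eq_sign_areaForm (x y : V) :
    (o.oangle x y).sign = SignType.sign (o.areaForm x y) := by
  rcases eq_or_ne x 0 with rfl | hx
  · simp
  rcases eq_or_ne y 0 with rfl | hy
  · simp
  have hnorm : 0 < ‖o.kahler x y‖ := norm_pos_iff.2 (o.kahler_ne_zero hx hy)
  have him : (o.kahler x y).im = o.areaForm x y := by simp [o.kahler_apply_apply]
  rw [Real.Angle.sign, Orientation.oangle, Real.Angle.sin_coe, Complex.sin_arg, him,
    div_eq_mul_inv, sign_mul, sign_pos (inv_pos.2 hnorm), mul_one]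

lemma areaForm_sub_sub_eq_zero_iff_collinear {a b c : V} :
    o.areaForm (b - a) (c - a) = 0 ↔ Collinear ℝ {a, b, c} := by
  let : Oriented ℝ V (Fin 2) := ⟨o⟩
  rw [Set.insert_comm, ← oangle_sign_eq_zero_iff_collinear, oangle, vsub_eq_sub, vsub_eq_sub,
    sign_oangle_eq_sign_areaForm, sign_eq_zero_iff]
  rfl

lemma norm_sq_smul_eq_inner_smul_add_areaForm_smul (a v : V) :
    ‖a‖ ^ 2 • v = inner ℝ a v • a + o.areaForm a v • o.rightAngleRotation a := by
  refine ext_inner_right ℝ fun z => ?_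
  rw [inner_add_left, real_inner_smul_left, real_inner_smul_left, real_inner_smul_left,
    o.inner_rightAngleRotation_left, o.inner_mul_inner_add_areaForm_mul_areaForm]

lemma areaForm_mul_areaForm_nonneg {f : V →ₗ[ℝ] ℝ} (hf : f ≠ 0) {a v w : V} (hfa : f a = 0)
    (hvw : 0 ≤ f v * f w) : 0 ≤ o.areaForm a v * o.areaForm a w := by
  rcases eq_or_ne a 0 with rfl | ha
  · simp
  have hnorm : 0 < ‖a‖ ^ 2 := by positivity
  have apply_eq (v : V) : ‖a‖ ^ 2 * f v = o.areaForm a v * f (o.rightAngleRotation a) := by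
    simpa [hfa] using congrArg f (norm_sq_smul_eq_inner_smul_add_areaForm_smul o a v)
  have hJ : f (o.rightAngleRotation a) ≠ 0 := fun h0 => hf <| LinearMap.ext fun v => by
    simpa [h0, hnorm.ne'] using apply_eq v
  refine nonneg_of_mul_nonneg_left (b := f (o.rightAngleRotation a) ^ 2) ?_ (by positivity)
  calc 0 ≤ (‖a‖ ^ 2) ^ 2 * (f v * f w) := by positivity
    _ = (‖a‖ ^ 2 * f v) * (‖a‖ ^ 2 * f w) := by ring
    _ = _ := by rw [apply_eq, apply_eq]; ring

lemma exists_linearEquiv_of_areaForm_ne_zero {u w : V} (h : o.areaForm u w ≠ 0) :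
    ∃ e : (ℝ × ℝ) ≃ₗ[ℝ] V, ∀ x y, e (x, y) = x • u + y • w := by
  let L : ℝ × ℝ →ₗ[ℝ] V :=
    (LinearMap.toSpanSingleton ℝ V u).coprod (LinearMap.toSpanSingleton ℝ V w)
  have hL : Function.Injective L := (injective_iff_map_eq_zero L).2 fun ⟨x, y⟩ hxy => by
    have hxy : x • u + y • w = 0 := hxy
    have hx := congrArg (fun z => o.areaForm z w) hxy
    have hy := congrArg (o.areaForm u) hxy
    simp only [map_add, map_smul, LinearMap.add_apply, LinearMap.smul_apply, map_zero,
      LinearMap.zero_apply, o.areaForm_apply_self, smul_eq_mul, mul_zero, zero_add, add_zero,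
      mul_eq_zero, h, or_false] at hx hy
    exact Prod.ext hx hy
  have : FiniteDimensional ℝ V := FiniteDimensional.of_fact_finrank_eq_succ 1
  exact ⟨LinearEquiv.ofInjectiveOfFinrankEq L hL (by simp [Fact.out (p := finrank ℝ V = 2)]),
    fun _ _ => rfl⟩

end AreaForm

section CyclicIndex

variable {n : ℕ} [NeZero n]

lemma eq_of_forall_apply_add_one_eq {α : Type*} {a : Fin n → α} (h : ∀ i, a (i + 1) = a i)
    (i : Fin n) : a i = a 0 := by
  obtain ⟨m, rfl⟩ := Nat.exists_eq_succ_of_ne_zero (NeZero.ne n)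
  induction i using Fin.induction with
  | zero => rfl
  | succ i ih => rw [← Fin.coeSucc_eq_succ, h, ih]

lemma add_one_ne_self (hn : 2 ≤ n) (i : Fin n) : i + 1 ≠ i := by
  rw [Ne, add_eq_left, Fin.one_eq_zero_iff]
  omega

lemma add_one_add_one_ne_self (hn : 3 ≤ n) (i : Fin n) : i + 1 + 1 ≠ i := by
  rw [Ne, add_assoc, add_eq_left, Fin.ext_iff, Fin.val_add, Fin.val_one', Fin.val_zero,
    ← Nat.add_mod, Nat.mod_eq_of_lt (by omega)]
  omega

end CyclicIndex

namespace ConvexPolygon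

open Module

instance : Fact (finrank ℝ Plane = 2) := ⟨finrank_euclideanSpace_fin⟩

variable {n : ℕ} [NeZero n] (P : ConvexPolygon n) (o : Orientation ℝ Plane (Fin 2))

/-- The side of a polygon from the `i`-th vertex to the next one, as a vector. -/
def edge (i : Fin n) : Plane := P.V (i + 1) - P.V i

/-- The vertices of the polygon are labeled counterclockwise with respect to `o`, expressed by
every vertex lying to the left of each side it is not on. -/
def IsPositivelyOriented : Prop :=
  ∀ i j, j ≠ i → j ≠ i + 1 → 0 < o.areaForm (P.edge i) (P.V j - P.V i)

variable {P o}

lemma not_wbtw {i j l : Fin n} (hij : i ≠ j) (hlj : l ≠ j) : ¬ Wbtw ℝ (P.V i) (P.V j) (P.V l) :=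
  fun h => P.strictlyConvex j <| segment_subset_convexHull (Set.mem_image_of_mem _ hij)
    (Set.mem_image_of_mem _ hlj) (mem_segment_iff_wbtw.2 h)

lemma not_collinear {i j l : Fin n} (hij : i ≠ j) (hil : i ≠ l) (hjl : j ≠ l) :
    ¬ Collinear ℝ {P.V i, P.V j, P.V l} := fun h => by
  rcases h.wbtw_or_wbtw_or_wbtw with h | h | h
  · exact not_wbtw hij hjl.symm h
  · exact not_wbtw hjl hil h
  · exact not_wbtw hil.symm hij.symm h

lemma interior_carrier_nonempty (hn : 3 ≤ n) : (interior P.carrier).Nonempty := by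
  let i : Fin 3 ↪ Fin n := Fin.castLEEmb hn
  have hind : AffineIndependent ℝ ![P.V (i 0), P.V (i 1), P.V (i 2)] :=
    affineIndependent_iff_not_collinear_set.2
      (not_collinear (i.injective.ne (by decide)) (i.injective.ne (by decide))
        (i.injective.ne (by decide)))
  rw [carrier, interior_convexHull_nonempty_iff_affineSpan_eq_top, eq_top_iff,
    ← hind.affineSpan_eq_top_iff_card_eq_finrank_add_one.2 (by simp)]
  refine affineSpan_mono ℝ ?_
  rintro _ ⟨j, rfl⟩
  fin_cases j <;> exact ⟨_, rfl⟩

lemma exists_supporting_functional (hn : 3 ≤ n) (i : Fin n) :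
    ∃ f : Plane →L[ℝ] ℝ, f ≠ 0 ∧ f (P.edge i) = 0 ∧ ∀ j, f (P.V j - P.V i) ≤ 0 := by
  have hconv : Convex ℝ P.carrier := convex_convexHull ℝ _
  set M := midpoint ℝ (P.V i) (P.V (i + 1)) with hM
  obtain ⟨f, hf⟩ := geometric_hahn_banach_open_point hconv.interior isOpen_interior
    (P.cyclic i (midpoint_mem_segment _ _)).2
  have hfV (j : Fin n) : f (P.V j) ≤ f M := by
    have hVj : P.V j ∈ closure (interior P.carrier) := by
      rw [hconv.closure_interior_eq_closure_of_nonempty_interior (interior_carrier_nonempty hn)]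
      exact subset_closure (subset_convexHull ℝ _ ⟨j, rfl⟩)
    exact closure_minimal (fun z hz => (hf z hz).le) (isClosed_le f.continuous continuous_const) hVj
  have hfM : f (P.V i) + f (P.V (i + 1)) = 2 * f M := by
    rw [hM, midpoint_eq_smul_add, map_smul, map_add, smul_eq_mul, invOf_eq_inv,
      mul_inv_cancel_left₀ two_ne_zero]
  have hi := hfV i
  have hi' := hfV (i + 1)
  refine ⟨f, ?_, ?_, fun j => ?_⟩
  · rintro rfl
    obtain ⟨z, hz⟩ := interior_carrier_nonempty (P := P) hn
    simpa using hf z hz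
  · rw [edge, map_sub]
    linarith
  · rw [map_sub]
    linarith [hfV j]

lemma sign_areaForm_edge_eq (hn : 3 ≤ n) {i j l : Fin n} (hji : j ≠ i) (hji' : j ≠ i + 1)
    (hli : l ≠ i) (hli' : l ≠ i + 1) :
    SignType.sign (o.areaForm (P.edge i) (P.V j - P.V i)) =
      SignType.sign (o.areaForm (P.edge i) (P.V l - P.V i)) := by
  have areaForm_ne_zero {j : Fin n} (hji : j ≠ i) (hji' : j ≠ i + 1) :
      o.areaForm (P.edge i) (P.V j - P.V i) ≠ 0 :=
    (areaForm_sub_sub_eq_zero_iff_collinear o).not.2 (not_collinear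
      (add_one_ne_self (by omega) i).symm hji.symm hji'.symm)
  obtain ⟨f, hf, hfi, hfV⟩ := exists_supporting_functional (P := P) hn i
  have hmul := (areaForm_mul_areaForm_nonneg o (f := f) (by exact_mod_cast hf) hfi
    (mul_nonneg_of_nonpos_of_nonpos (hfV j) (hfV l))).lt_of_ne'
    (mul_ne_zero (areaForm_ne_zero hji hji') (areaForm_ne_zero hli hli'))
  rcases pos_and_pos_or_neg_and_neg_of_mul_pos hmul with ⟨hj, hl⟩ | ⟨hj, hl⟩
  · rw [sign_pos hj, sign_pos hl]
  · rw [sign_neg hj, sign_neg hl]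

lemma areaForm_edge_add_one (i : Fin n) :
    o.areaForm (P.edge (i + 1)) (P.V i - P.V (i + 1)) =
      o.areaForm (P.edge i) (P.V (i + 1 + 1) - P.V i) := by
  rw [edge, edge, ← neg_sub (P.V (i + 1)) (P.V i), map_neg, ← o.areaForm_swap,
    ← sub_add_sub_cancel (P.V (i + 1 + 1)) (P.V (i + 1)) (P.V i), map_add, o.areaForm_apply_self,
    add_zero]

lemma sign_areaForm_edge (hn : 3 ≤ n) {i j : Fin n} (hji : j ≠ i) (hji' : j ≠ i + 1) :
    SignType.sign (o.areaForm (P.edge i) (P.V j - P.V i)) =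
      SignType.sign (o.areaForm (P.edge 0) (P.V (0 + 1 + 1) - P.V 0)) := by
  let sgn (i : Fin n) := SignType.sign (o.areaForm (P.edge i) (P.V (i + 1 + 1) - P.V i))
  have sgn_add_one (i : Fin n) : sgn (i + 1) = sgn i := by
    simp only [sgn]
    rw [← areaForm_edge_add_one i]
    exact sign_areaForm_edge_eq hn (add_one_add_one_ne_self hn _) (add_one_ne_self (by omega) _)
      (add_one_ne_self (by omega) i).symm (add_one_add_one_ne_self hn i).symm
  rw [sign_areaForm_edge_eq hn hji hji' (add_one_add_one_ne_self hn i)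
    (add_one_ne_self (by omega) _)]
  exact eq_of_forall_apply_add_one_eq sgn_add_one i

variable (P) in
lemma exists_isPositivelyOriented (hn : 3 ≤ n) :
    ∃ o : Orientation ℝ Plane (Fin 2), P.IsPositivelyOriented o := by
  let o : Orientation ℝ Plane (Fin 2) := (EuclideanSpace.basisFun (Fin 2) ℝ).toBasis.orientation
  have hne : o.areaForm (P.edge 0) (P.V (0 + 1 + 1) - P.V 0) ≠ 0 :=
    (areaForm_sub_sub_eq_zero_iff_collinear o).not.2 (not_collinear
      (add_one_ne_self (by omega) 0).symm
      (add_one_add_one_ne_self hn 0).symm (add_one_ne_self (by omega) _).symm)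
  rcases hne.lt_or_gt with hneg | hpos
  · refine ⟨-o, fun i j hji hji' => ?_⟩
    rw [o.areaForm_neg_orientation, LinearMap.neg_apply, LinearMap.neg_apply, neg_pos,
      ← sign_eq_neg_one_iff, sign_areaForm_edge hn hji hji', sign_neg hneg]
  · refine ⟨o, fun i j hji hji' => ?_⟩
    rw [← sign_eq_one_iff, sign_areaForm_edge hn hji hji', sign_pos hpos]

lemma IsPositivelyOriented.oangle_edge (h : P.IsPositivelyOriented o) (hn : 3 ≤ n) (i : Fin n) :
    o.oangle (P.edge i) (P.edge (i + 1)) = ((Real.pi - P.angle (i + 1) : ℝ) : Real.Angle) := by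
  have hpos : 0 < o.areaForm (P.edge i) (P.edge (i + 1)) := by
    have := h (i + 1) i (add_one_ne_self (by omega) i).symm (add_one_add_one_ne_self hn i).symm
    rwa [← neg_sub, ← edge, map_neg, ← o.areaForm_swap] at this
  rw [o.oangle_eq_angle_of_sign_eq_one (by rw [sign_oangle_eq_sign_areaForm, sign_pos hpos]),
    angle, add_sub_cancel_right, EuclideanGeometry.angle, vsub_eq_sub, vsub_eq_sub,
    ← neg_sub (P.V (i + 1)), InnerProductGeometry.angle_neg_left, sub_sub_cancel]
  rfl

lemma IsPositivelyOriented.edge_ne_zero (h : P.IsPositivelyOriented o) (hn : 3 ≤ n) (i : Fin n) :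
    P.edge i ≠ 0 := fun h0 => by
  simpa [h0] using h i (i + 1 + 1) (add_one_add_one_ne_self hn i) (add_one_ne_self (by omega) _)

lemma IsPositivelyOriented.oangle_edge_eq_pi (h : P.IsPositivelyOriented o) (hn : 3 ≤ n)
    {i : Fin n}
    (hsum : P.angle (i + 1) + P.angle (i + 1 + 1) + P.angle (i + 1 + 1 + 1) = 2 * Real.pi) :
    o.oangle (P.edge i) (P.edge (i + 1 + 1 + 1)) = Real.pi := by
  have hne := h.edge_ne_zero hn
  rw [← o.oangle_add (hne i) (hne (i + 1 + 1)) (hne _),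
    ← o.oangle_add (hne i) (hne (i + 1)) (hne _), h.oangle_edge hn, h.oangle_edge hn,
    h.oangle_edge hn, ← Real.Angle.coe_add, ← Real.Angle.coe_add]
  congr 1
  linarith

lemma IsPositivelyOriented.exists_edge_eq_neg_smul (h : P.IsPositivelyOriented o) (hn : 3 ≤ n)
    {i : Fin n}
    (hsum : P.angle (i + 1) + P.angle (i + 1 + 1) + P.angle (i + 1 + 1 + 1) = 2 * Real.pi) :
    ∃ r > (0 : ℝ), P.edge (i + 1 + 1 + 1) = -(r • P.edge i) := by
  obtain ⟨hi, hi', hray⟩ := o.oangle_eq_pi_iff_sameRay_neg.1 (h.oangle_edge_eq_pi hn hsum)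
  obtain ⟨r, hr, heq⟩ := hray.exists_pos_left hi (neg_ne_zero.2 hi')
  exact ⟨r, hr, by rw [heq, neg_neg]⟩

end ConvexPolygon

section ParallelSides

lemma exists_isohedral_tiling_image_normalPentagon {p q c : ℝ} (hp : -1 < p) (hp' : p < 1)
    (hc : 0 < c) (hq : (1 - p) + (1 + p) * c < 2 * q) (e : (ℝ × ℝ) ≃ₗ[ℝ] Plane) (m : Plane) :
    ∃ T, IsMonohedralTiling ((fun z => m + e z) '' normalPentagon p q c) T ∧ IsIsohedral T := by
  obtain ⟨T, hT, hiso⟩ := ((isCentralTile_normalPentagon hp hp' hc hq).image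
    e.toContinuousLinearEquiv).exists_isohedral_tiling
  refine ⟨T, hT.of_isIsometricCopy ⟨(IsometryEquiv.addLeft m).symm, ?_⟩, hiso⟩
  rw [← Set.image_image (m + ·) e]
  exact ((IsometryEquiv.addLeft m).symm_image_image _).symm

lemma image_normalPentagon (p q c : ℝ) (e : (ℝ × ℝ) ≃ₗ[ℝ] Plane) (m : Plane) :
    (fun z => m + e z) '' normalPentagon p q c = convexHull ℝ
      {m + e (-1, 1), m + e (p, q), m + e (1, c), m + e (1, 0), m + e (-1, 0)} := by
  let f : ℝ × ℝ →ᵃ[ℝ] Plane := AffineMap.const ℝ _ m + (e : ℝ × ℝ →ₗ[ℝ] Plane).toAffineMap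
  change f '' _ = _
  rw [normalPentagon, f.image_convexHull]
  simp only [Set.image_insert_eq, Set.image_singleton]
  rfl

variable (o : Orientation ℝ Plane (Fin 2))

lemma exists_affine_coordinates {A E D : Plane} (h : o.areaForm (A - E) (D - E) ≠ 0) :
    ∃ (m : Plane) (e : (ℝ × ℝ) ≃ₗ[ℝ] Plane),
      A = m + e (-1, 1) ∧ D = m + e (1, 0) ∧ E = m + e (-1, 0) := by
  obtain ⟨e, he⟩ := exists_linearEquiv_of_areaForm_ne_zero o (u := (2⁻¹ : ℝ) • (D - E))
    (w := A - E) (by rw [o.areaForm_swap, map_smul]; exact neg_ne_zero.2 (by simpa using h))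
  refine ⟨midpoint ℝ D E, e, ?_, ?_, ?_⟩ <;> rw [he, midpoint_eq_smul_add, invOf_eq_inv] <;> module

lemma exists_areaForm_eq_mul_crossForm (e : (ℝ × ℝ) ≃ₗ[ℝ] Plane) :
    ∃ κ, ∀ z w, o.areaForm (e z) (e w) = κ * crossForm z w := by
  refine ⟨o.areaForm (e (1, 0)) (e (0, 1)), fun z w => ?_⟩
  have he (z : ℝ × ℝ) : e z = z.1 • e (1, 0) + z.2 • e (0, 1) := by
    rw [← map_smul, ← map_smul, ← map_add]
    simp
  rw [he z, he w]
  simp only [map_add, map_smul, LinearMap.add_apply, LinearMap.smul_apply, o.areaForm_apply_self,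
    o.areaForm_swap (e (0, 1)) (e (1, 0)), smul_eq_mul, crossForm_apply]
  ring

lemma exists_isohedral_tiling_of_parallel {A B C D E : Plane} {c : ℝ} (hc : 0 < c)
    (hpar : D - C = -(c • (A - E)))
    (hEAB : 0 < o.areaForm (A - E) (B - E)) (hEAD : 0 < o.areaForm (A - E) (D - E))
    (hCDB : 0 < o.areaForm (D - C) (B - C)) (hABC : 0 < o.areaForm (B - A) (C - A)) :
    ∃ T, IsMonohedralTiling (convexHull ℝ {A, B, C, D, E}) T ∧ IsIsohedral T := by
  obtain ⟨m, e, rfl, rfl, rfl⟩ := exists_affine_coordinates o hEAD.ne'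
  obtain ⟨⟨p, q⟩, hpq⟩ := e.surjective (B - m)
  obtain rfl : B = m + e (p, q) := by rw [hpq, add_sub_cancel]
  obtain rfl : C = m + e (1, c) := by
    rw [← sub_sub_cancel (m + e (1, 0)) C, hpar, sub_neg_eq_add, add_sub_add_left_eq_sub,
      ← map_sub, ← map_smul, add_assoc, ← map_add]
    simp
  obtain ⟨κ, hκ⟩ := exists_areaForm_eq_mul_crossForm o e
  simp only [add_sub_add_left_eq_sub, ← map_sub, hκ, crossForm_apply, Prod.mk_sub_mk]
    at hEAB hEAD hCDB hABC
  have hκ_neg : κ < 0 := by linarith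
  have neg_factor {t : ℝ} (h : 0 < κ * t) : t < 0 := (neg_iff_neg_of_mul_pos h).1 hκ_neg
  rw [← image_normalPentagon]
  refine exists_isohedral_tiling_image_normalPentagon ?_ ?_ hc ?_ e m
  · linarith [neg_factor hEAB]
  · linarith [pos_of_mul_pos_right (b := 1 - p) (by linarith [neg_factor hCDB]) hc.le]
  · linarith [neg_factor hABC]

end ParallelSides

lemma range_eq_of_fin_five {α : Type*} (f : Fin 5 → α) (i : Fin 5) :
    Set.range f = {f (i + 1), f (i + 1 + 1), f (i + 1 + 1 + 1), f (i + 1 + 1 + 1 + 1), f i} := by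
  have huniv : (Set.univ : Set (Fin 5)) =
      {i + 1, i + 1 + 1, i + 1 + 1 + 1, i + 1 + 1 + 1 + 1, i} := by
    ext j
    simp only [Set.mem_univ, Set.mem_insert_iff, Set.mem_singleton_iff, true_iff]
    decide +revert
  rw [← Set.image_univ, huniv]
  simp only [Set.image_insert_eq, Set.image_singleton]

/-- every convex pentagon with three consecutive angles summing to
360° (Type 1) admits an isohedral monohedral tiling of the plane. -/
theorem statement_3 (P : ConvexPentagon)
    (h1 : ∃ k : Fin 5, P.angle k + P.angle (k + 1) + P.angle (k + 2) = 2 * Real.pi) :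
    ∃ T : Set (Set Plane), IsMonohedralTiling P.carrier T ∧ IsIsohedral T := by
  obtain ⟨k, hk⟩ := h1
  obtain ⟨i, rfl⟩ : ∃ i, k = i + 1 := ⟨k - 1, (sub_add_cancel k 1).symm⟩
  rw [show i + 1 + 2 = i + 1 + 1 + 1 from (add_assoc (i + 1) 1 1).symm] at hk
  obtain ⟨o, ho⟩ := P.exists_isPositivelyOriented (by norm_num)
  obtain ⟨c, hc, hpar⟩ := ho.exists_edge_eq_neg_smul (by norm_num) (i := i) hk
  rw [ConvexPolygon.carrier, range_eq_of_fin_five P.V i]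
  exact exists_isohedral_tiling_of_parallel o hc hpar
    (ho i (i + 1 + 1) (by simp [add_assoc]) (by simp [add_assoc]))
    (ho i (i + 1 + 1 + 1 + 1) (by simp [add_assoc]) (by simp [add_assoc]))
    (ho (i + 1 + 1 + 1) (i + 1 + 1) (by simp [add_assoc]) (by simp [add_assoc]))
    (ho (i + 1) (i + 1 + 1 + 1) (by simp [add_assoc]) (by simp [add_assoc]))
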